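/- arXiv:2208.12182 — 5 statements merged into one kernel-verified Lean document; each statement's English description precedes it below -/
import Mathlib

section
/- Let n be a positive integer and let a : Fin n → ℝ with a i > 0 for all i. Then ∫_ℝ (sin(2πx)/(2πx))² · ∏_{i=1}^{n} cos(2π a_i x)² dx ≥ 1/2^{n+1}, and equality holds if and only if the subset sums of {a_1,…,a_n} are 1-separated, i.e. for all subsets S ≠ T of {1,…,n} one has |∑_{i∈S} a_i − ∑_{i∈T} a_i| ≥ 1. -/
open Real MeasureTheory Finset

/-- The factor `sin(2πx)/(2πx)`, interpreted as its limit value `1` at `x = 0`. -/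
noncomputable def sinc2pi (x : ℝ) : ℝ :=
  if x = 0 then 1 else Real.sin (2 * π * x) / (2 * π * x)

/-- The subset sums of the family `a` are 1-separated. -/
def SepSums {n : ℕ} (a : Fin n → ℝ) : Prop :=
  ∀ S T : Finset (Fin n), S ≠ T → 1 ≤ |∑ i ∈ S, a i - ∑ i ∈ T, a i|

/-!
Since `|∏ (1 + exp (2 i tⱼ))|² = 4ⁿ ∏ cos² tⱼ`, the product of squared cosines is a positive
combination of the functions `cos (4π (∑_S a - ∑_T a) x)` over pairs `(S, T)` of subsets. Against
the Fejér-type weight `sinc²`, whose Fourier transform is a triangle function supported on a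
bounded interval, each pair contributes a nonnegative amount; the `2ⁿ` diagonal pairs give exactly
the lower bound, and an off-diagonal pair contributes nothing precisely when its two subset sums
are far enough apart for their difference to leave the support of the triangle.
-/

section SubsetSumExpansion

lemma normSq_sum_exp_mul_I {ι : Type*} (s : Finset ι) (θ : ι → ℝ) :
    Complex.normSq (∑ j ∈ s, Complex.exp (θ j * Complex.I)) =
      ∑ j ∈ s, ∑ k ∈ s, cos (θ j - θ k) := by
  simp only [Complex.normSq_apply, Complex.re_sum, Complex.im_sum, Complex.exp_ofReal_mul_I_re,
    Complex.exp_ofReal_mul_I_im, sum_mul_sum, ← sum_add_distrib, ← cos_sub]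

lemma normSq_one_add_exp_mul_I (θ : ℝ) :
    Complex.normSq (1 + Complex.exp (θ * Complex.I)) = 4 * cos (θ / 2) ^ 2 := by
  rw [cos_sq, mul_div_cancel₀ θ two_ne_zero]
  simp only [Complex.normSq_apply, Complex.add_re, Complex.add_im, Complex.one_re, Complex.one_im,
    Complex.exp_ofReal_mul_I_re, Complex.exp_ofReal_mul_I_im]
  linear_combination sin_sq_add_cos_sq θ

lemma prod_cos_sq_eq_sum_cos {ι : Type*} (s : Finset ι) (t : ι → ℝ) :
    ∏ i ∈ s, cos (t i) ^ 2 =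
      (1 / 4 ^ #s) * ∑ S ∈ s.powerset, ∑ T ∈ s.powerset,
        cos (2 * (∑ i ∈ S, t i - ∑ i ∈ T, t i)) := by
  have expand : ∏ i ∈ s, (1 + Complex.exp ((2 * t i : ℝ) * Complex.I)) =
      ∑ S ∈ s.powerset, Complex.exp ((2 * ∑ i ∈ S, t i : ℝ) * Complex.I) := by
    simp only [prod_one_add, ← Complex.exp_sum, ← sum_mul, ← Complex.ofReal_sum, mul_sum]
  have normSq_expand := congrArg Complex.normSq expand
  simp only [map_prod, normSq_one_add_exp_mul_I, normSq_sum_exp_mul_I, prod_mul_distrib,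
    prod_const, mul_div_cancel_left₀ _ (two_ne_zero' ℝ), ← mul_sub] at normSq_expand
  rw [← normSq_expand, one_div, inv_mul_cancel_left₀ (by positivity)]

end SubsetSumExpansion

section CosineTransform

lemma integral_eq_zero_of_odd {G E : Type*} [MeasurableSpace G] [AddGroup G] [MeasurableNeg G]
    [NormedAddCommGroup E] [NormedSpace ℝ E] {μ : Measure G} [μ.IsNegInvariant] {f : G → E}
    (hf : f.Odd) : ∫ x, f x ∂μ = 0 := by
  have h := integral_neg_eq_self f μ
  simp only [hf.eq, integral_neg] at h
  have : IsAddTorsionFree E := .of_isTorsionFree ℝ E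
  exact neg_eq_self.mp h

open FourierTransform in
lemma fourier_ofReal_of_even {f : ℝ → ℝ} (hf : f.Even) (hf_int : Integrable f) (x : ℝ) :
    𝓕 (fun y => (f y : ℂ)) x = ((∫ y, cos (2 * π * x * y) * f y : ℝ) : ℂ) := by
  have integrable_bdd_mul {g : ℝ → ℝ} (hg : Continuous g) (hg_le : ∀ y, |g y| ≤ 1) :
      Integrable fun y => g y * f y :=
    hf_int.bdd_mul hg.aestronglyMeasurable (ae_of_all _ hg_le)
  have hcos := integrable_bdd_mul (g := fun y => cos (2 * π * x * y)) (by fun_prop)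
    fun y => abs_cos_le_one _
  have hsin := integrable_bdd_mul (g := fun y => sin (2 * π * x * y)) (by fun_prop)
    fun y => abs_sin_le_one _
  have sine_part : ∫ y, sin (2 * π * x * y) * f y = 0 :=
    integral_eq_zero_of_odd fun y => by simp [hf.eq]
  have euler (y : ℝ) : Complex.exp (↑(-2 * π * y * x) * Complex.I) • (f y : ℂ) =
      ((cos (2 * π * x * y) * f y : ℝ) : ℂ) -
        ((sin (2 * π * x * y) * f y : ℝ) : ℂ) * Complex.I := by
    rw [show -2 * π * y * x = -(2 * π * x * y) by ring, smul_eq_mul, Complex.exp_mul_I,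
      ← Complex.ofReal_cos, ← Complex.ofReal_sin, cos_neg, sin_neg]
    push_cast
    ring
  simp only [fourier_real_eq_integral_exp_smul, euler]
  rw [integral_sub hcos.ofReal (hsin.ofReal.mul_const _), integral_mul_const,
    integral_complex_ofReal, integral_complex_ofReal, sine_part]
  simp

open FourierTransform in
lemma cosine_inversion_of_even {f g : ℝ → ℝ} (hf : f.Even) (hf_int : Integrable f)
    (hg_int : Integrable g) (hg : ∀ x, ∫ y, cos (2 * π * x * y) * f y = g x) {y : ℝ}
    (hf_cont : ContinuousAt f y) :
    ∫ x, cos (2 * π * y * x) * g x = f y := by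
  have fourier_f : 𝓕 (fun y => (f y : ℂ)) = fun x => (g x : ℂ) := by
    ext x
    rw [fourier_ofReal_of_even hf hf_int, hg]
  have g_even : g.Even := fun x => by simp only [← hg, mul_neg, neg_mul, cos_neg]
  have fourier_f_int : Integrable (𝓕 fun y => (f y : ℂ)) := by
    rw [fourier_f]
    exact hg_int.ofReal
  have inversion := hf_int.ofReal.fourierInv_fourier_eq fourier_f_int
    (Complex.continuous_ofReal.continuousAt.comp hf_cont)
  simp only [fourier_f, fourierInv_eq_fourier_neg,
    fourier_ofReal_of_even g_even hg_int, mul_neg, neg_mul, cos_neg] at inversion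
  exact_mod_cast inversion

end CosineTransform

section Triangle

/-- The triangle function of height and half-width `h`, supported on `[-h, h]`. Up to scaling, it
is the Fourier transform of the squared sinc function. -/
noncomputable def triangle (h y : ℝ) : ℝ := max 0 (h - |y|)

lemma triangle_nonneg (h y : ℝ) : 0 ≤ triangle h y := le_max_left _ _

lemma triangle_eq_zero_iff {h y : ℝ} : triangle h y = 0 ↔ h ≤ |y| := by
  rw [triangle, max_eq_left_iff, sub_nonpos]

lemma triangle_zero_right {h : ℝ} (hh : 0 ≤ h) : triangle h 0 = h := by
  simp [triangle, hh]

lemma triangle_mul_mul {c : ℝ} (hc : 0 ≤ c) (h y : ℝ) :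
    triangle (c * h) (c * y) = c * triangle h y := by
  rw [triangle, triangle, abs_mul, abs_of_nonneg hc, ← mul_sub, mul_max_of_nonneg _ _ hc, mul_zero]

lemma even_triangle (h : ℝ) : (triangle h).Even := fun y => by simp only [triangle, abs_neg]

lemma continuous_triangle (h : ℝ) : Continuous (triangle h) := by
  unfold triangle
  fun_prop

lemma integrable_triangle (h : ℝ) : Integrable (triangle h) := by
  refine (continuous_triangle h).integrable_of_hasCompactSupport <|
    HasCompactSupport.intro (isCompact_Icc (a := -h) (b := h)) fun y hy => ?_
  rw [Set.mem_Icc, ← abs_le, not_le] at hy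
  exact triangle_eq_zero_iff.mpr hy.le

lemma integral_sub_mul_cos (w h : ℝ) :
    ∫ y in (0 : ℝ)..h, (h - y) * cos (w * y) = h ^ 2 / 2 * sinc (w * h / 2) ^ 2 := by
  rcases eq_or_ne w 0 with rfl | hw
  · simp [intervalIntegral.integral_comp_sub_left (fun y => y) h]
  rcases eq_or_ne h 0 with rfl | hh
  · simp
  have antideriv (y : ℝ) : HasDerivAt (fun y => (h - y) * sin (w * y) / w - cos (w * y) / w ^ 2)
      ((h - y) * cos (w * y)) y := by
    have hwy : HasDerivAt (fun y => w * y) w y := by simpa using (hasDerivAt_id y).const_mul w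
    refine (((((hasDerivAt_id y).const_sub h).mul hwy.sin).div_const w).sub
      (hwy.cos.div_const (w ^ 2))).congr_deriv ?_
    simp only [id]
    field_simp
    ring
  have half_angle : sin (w * h / 2) ^ 2 = (1 - cos (w * h)) / 2 := by
    rw [sin_sq_eq_half_sub, mul_div_cancel₀ _ two_ne_zero]
    ring
  rw [intervalIntegral.integral_eq_sub_of_hasDerivAt (fun y _ => antideriv y)
    (Continuous.intervalIntegrable (by fun_prop) _ _), sinc_of_ne_zero (by positivity), div_pow,
    half_angle]
  simp only [sub_self, zero_mul, zero_div, mul_zero, sin_zero, cos_zero]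
  field_simp
  ring

lemma integral_cos_mul_triangle {h : ℝ} (hh : 0 ≤ h) (x : ℝ) :
    ∫ y, cos (2 * π * x * y) * triangle h y = h ^ 2 * sinc (π * h * x) ^ 2 := by
  have fold : ∫ y, cos (2 * π * x * y) * triangle h y =
      2 * ∫ y in Set.Ioi 0, max 0 (h - y) * cos (2 * π * x * y) := by
    rw [← integral_comp_abs (f := fun y => max 0 (h - y) * cos (2 * π * x * y))]
    refine integral_congr_ae (ae_of_all _ fun y => ?_)
    rcases abs_choice y with hy | hy <;> simp [triangle, hy, mul_comm]
  have truncate : ∫ y in Set.Ioi 0, max 0 (h - y) * cos (2 * π * x * y) =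
      ∫ y in (0 : ℝ)..h, (h - y) * cos (2 * π * x * y) := by
    rw [intervalIntegral.integral_of_le hh, setIntegral_eq_of_subset_of_forall_sdiff_eq_zero
      measurableSet_Ioi Set.Ioc_subset_Ioi_self fun y hy => ?_]
    · refine setIntegral_congr_fun measurableSet_Ioc fun y hy => ?_
      simp only [max_eq_right (sub_nonneg.mpr hy.2)]
    · have : h ≤ y := le_of_not_ge fun hyh => hy.2 ⟨hy.1, hyh⟩
      rw [max_eq_left (sub_nonpos.mpr this), zero_mul]
  rw [fold, truncate, integral_sub_mul_cos, show 2 * π * x * h / 2 = π * h * x by ring]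
  ring

end Triangle

section SincSq

lemma mul_sinc (x : ℝ) : x * sinc x = sin x := by
  rcases eq_or_ne x 0 with rfl | hx
  · simp
  · rw [sinc_of_ne_zero hx, mul_div_cancel₀ _ hx]

lemma sinc_sq_le (x : ℝ) : sinc x ^ 2 ≤ 2 * (1 + x ^ 2)⁻¹ := by
  rw [← div_eq_mul_inv, le_div_iff₀ (by positivity)]
  calc sinc x ^ 2 * (1 + x ^ 2) = sinc x ^ 2 + sin x ^ 2 := by rw [← mul_sinc]; ring
    _ ≤ 1 + 1 := add_le_add ((sq_le_one_iff_abs_le_one _).mpr (abs_sinc_le_one x))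
        (sin_sq_le_one x)
    _ = 2 := one_add_one_eq_two

lemma integrable_sinc_sq : Integrable fun x => sinc x ^ 2 := by
  refine (integrable_inv_one_add_sq.const_mul 2).mono'
    (by fun_prop : Continuous _).aestronglyMeasurable (ae_of_all _ fun x => ?_)
  rw [norm_of_nonneg (sq_nonneg _)]
  exact sinc_sq_le x

lemma integrable_cos_mul_sinc_sq {c : ℝ} (hc : c ≠ 0) (w : ℝ) :
    Integrable fun x => cos (w * x) * sinc (c * x) ^ 2 :=
  (integrable_sinc_sq.comp_mul_left' hc).bdd_mul (c := 1)
    (by fun_prop : Continuous _).aestronglyMeasurable (ae_of_all _ fun _ => abs_cos_le_one _)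

lemma integral_cos_mul_sinc_sq {h : ℝ} (hh : 0 < h) (y : ℝ) :
    ∫ x, cos (2 * π * y * x) * sinc (π * h * x) ^ 2 = triangle h y / h ^ 2 := by
  have inversion := cosine_inversion_of_even (even_triangle h) (integrable_triangle h)
    ((integrable_sinc_sq.comp_mul_left' (by positivity : π * h ≠ 0)).const_mul (h ^ 2))
    (integral_cos_mul_triangle hh.le) (continuous_triangle h).continuousAt (y := y)
  simp only [mul_left_comm _ (h ^ 2), integral_const_mul] at inversion
  rw [← inversion, mul_div_cancel_left₀ _ (by positivity)]

lemma integral_sinc_sq_mul_prod_cos_sq {ι : Type*} [Fintype ι] {δ : ℝ} (hδ : 0 < δ) (a : ι → ℝ) :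
    ∫ x, sinc (2 * π * δ * x) ^ 2 * ∏ i, cos (2 * π * a i * x) ^ 2 =
      1 / (4 ^ Fintype.card ι * (2 * δ ^ 2)) *
        ∑ S : Finset ι, ∑ T : Finset ι, triangle δ (∑ i ∈ S, a i - ∑ i ∈ T, a i) := by
  have angle (S T : Finset ι) (x : ℝ) :
      2 * (∑ i ∈ S, 2 * π * a i * x - ∑ i ∈ T, 2 * π * a i * x) =
        2 * π * (2 * (∑ i ∈ S, a i - ∑ i ∈ T, a i)) * x := by
    simp only [← sum_mul, ← mul_sum]
    ring
  have expand (x : ℝ) : sinc (2 * π * δ * x) ^ 2 * ∏ i, cos (2 * π * a i * x) ^ 2 =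
      1 / 4 ^ Fintype.card ι * ∑ S : Finset ι, ∑ T : Finset ι,
        cos (2 * π * (2 * (∑ i ∈ S, a i - ∑ i ∈ T, a i)) * x) *
          sinc (π * (2 * δ) * x) ^ 2 := by
    rw [prod_cos_sq_eq_sum_cos, powerset_univ, card_univ, mul_comm, mul_assoc,
      show 2 * π * δ * x = π * (2 * δ) * x by ring]
    simp only [angle, sum_mul]
  have pair_integral (u : ℝ) : ∫ x, cos (2 * π * (2 * u) * x) * sinc (π * (2 * δ) * x) ^ 2 =
      1 / (2 * δ ^ 2) * triangle δ u := by
    rw [integral_cos_mul_sinc_sq (by positivity), triangle_mul_mul zero_le_two]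
    field_simp
  have integrable (S T : Finset ι) := integrable_cos_mul_sinc_sq
    (by positivity : π * (2 * δ) ≠ 0) (2 * π * (2 * (∑ i ∈ S, a i - ∑ i ∈ T, a i)))
  simp only [expand, integral_const_mul]
  rw [integral_finsetSum _ fun S _ => integrable_finsetSum _ fun T _ => integrable S T]
  simp only [integral_finsetSum _ fun T _ => integrable _ T, pair_integral, ← mul_sum]
  field_simp

end SincSq

section DiagonalSum

variable {α M : Type*} [Fintype α] [AddCommMonoid M] [PartialOrder M]

lemma sum_diag_le_sum_sum [IsOrderedAddMonoid M] {k : α → α → M} (hk : ∀ s t, 0 ≤ k s t) :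
    ∑ s, k s s ≤ ∑ s, ∑ t, k s t :=
  sum_le_sum fun s _ => single_le_sum (fun t _ => hk s t) (mem_univ s)

lemma sum_sum_eq_sum_diag_iff [IsOrderedCancelAddMonoid M] {k : α → α → M}
    (hk : ∀ s t, 0 ≤ k s t) :
    ∑ s, ∑ t, k s t = ∑ s, k s s ↔ Pairwise fun s t => k s t = 0 := by
  classical
  have row (s : α) : k s s = ∑ t, k s t ↔ ∀ t ≠ s, k s t = 0 := by
    rw [← add_sum_erase _ _ (mem_univ s), left_eq_add, sum_eq_zero_iff_of_nonneg fun t _ => hk s t]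
    simp
  rw [eq_comm, sum_eq_sum_iff_of_le fun s _ => single_le_sum (fun t _ => hk s t) (mem_univ s)]
  simp only [mem_univ, forall_const, row, Pairwise, ne_comm]

lemma card_mul_le_sum_triangle {δ : ℝ} (hδ : 0 ≤ δ) (f : α → ℝ) :
    Fintype.card α * δ ≤ ∑ s, ∑ t, triangle δ (f s - f t) := by
  simpa [triangle_zero_right hδ] using
    sum_diag_le_sum_sum fun s t => triangle_nonneg δ (f s - f t)

lemma sum_triangle_eq_card_mul_iff {δ : ℝ} (hδ : 0 ≤ δ) (f : α → ℝ) :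
    ∑ s, ∑ t, triangle δ (f s - f t) = Fintype.card α * δ ↔
      Pairwise fun s t => δ ≤ |f s - f t| := by
  simpa [triangle_zero_right hδ, triangle_eq_zero_iff] using
    sum_sum_eq_sum_diag_iff fun s t => triangle_nonneg δ (f s - f t)

end DiagonalSum

lemma sinc2pi_eq_sinc (x : ℝ) : sinc2pi x = sinc (2 * π * x) := by
  simp [sinc2pi, sinc_apply, pi_ne_zero]

theorem stmt_0_general {ι : Type*} [Fintype ι] {δ : ℝ} (hδ : 0 < δ) (a : ι → ℝ) :
    1 / (2 ^ (Fintype.card ι + 1) * δ) ≤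
      ∫ x, sinc (2 * π * δ * x) ^ 2 * ∏ i, cos (2 * π * a i * x) ^ 2 ∧
    (∫ x, sinc (2 * π * δ * x) ^ 2 * ∏ i, cos (2 * π * a i * x) ^ 2 =
        1 / (2 ^ (Fintype.card ι + 1) * δ) ↔
      Pairwise fun S T : Finset ι => δ ≤ |∑ i ∈ S, a i - ∑ i ∈ T, a i|) := by
  set c : ℝ := 1 / (4 ^ Fintype.card ι * (2 * δ ^ 2))
  have hc : 0 < c := by positivity
  have diagonal : 1 / (2 ^ (Fintype.card ι + 1) * δ) = c * (Fintype.card (Finset ι) * δ) := by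
    simp only [c, Fintype.card_finset, show (4 : ℝ) = 2 * 2 by norm_num, mul_pow]
    push_cast
    field_simp
    ring
  rw [integral_sinc_sq_mul_prod_cos_sq hδ, diagonal, mul_le_mul_iff_right₀ hc,
    mul_right_inj' hc.ne']
  exact ⟨card_mul_le_sum_triangle hδ.le _, sum_triangle_eq_card_mul_iff hδ.le _⟩

theorem stmt_0 (n : ℕ) (hn : 0 < n) (a : Fin n → ℝ) (ha : ∀ i, 0 < a i) :
    (1 / 2 ^ (n + 1) : ℝ) ≤
      ∫ x : ℝ, (sinc2pi x) ^ 2 * ∏ i, (Real.cos (2 * π * a i * x)) ^ 2 ∧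
    ((∫ x : ℝ, (sinc2pi x) ^ 2 * ∏ i, (Real.cos (2 * π * a i * x)) ^ 2)
        = 1 / 2 ^ (n + 1) ↔ SepSums a) := by
  simpa only [sinc2pi_eq_sinc, SepSums, Pairwise, mul_one, Fintype.card_fin] using
    stmt_0_general one_pos a
end

section
/- Let n be a positive integer and let a_1,…,a_n be positive integers. Then ∫_0^1 ∏_{i=1}^{n} cos(2π a_i x)² dx ≥ 1/2^n, with equality if and only if all subset sums are distinct, i.e. for all subsets S ≠ T of {1,…,n} one has ∑_{i∈S} a_i ≠ ∑_{i∈T} a_i. -/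
open Real MeasureTheory Finset

/-- The subset sums of the family `a` of natural numbers are all distinct. -/
def DistinctSums {n : ℕ} (a : Fin n → ℕ) : Prop :=
  ∀ S T : Finset (Fin n), S ≠ T → (∑ i ∈ S, a i) ≠ (∑ i ∈ T, a i)

/-!
Since `cos² θ = |1 + exp (2iθ)|² / 4`, expanding the product gives
`∏ᵢ cos² (2π aᵢ x) = 4⁻ⁿ |∑_S exp (4πi (∑_{i ∈ S} aᵢ) x)|²`. By orthogonality of the characters
`x ↦ exp (2πi m x)`, its integral is `4⁻ⁿ` times the number of pairs `(S, T)` with equal subset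
sums. The `2ⁿ` diagonal pairs always count, and there are no others exactly when the subset sums
are distinct.
-/

section CollisionPairs

variable {α β : Type*} [DecidableEq β]

/-- The ordered pairs of elements of `s` on which `f` takes the same value. The diagonal pairs are
included, so that `f` is injective on `s` when there are no further ones. -/
def collisionPairs (f : α → β) (s : Finset α) : Finset (α × α) :=
  {p ∈ s ×ˢ s | f p.1 = f p.2}

lemma mem_collisionPairs {f : α → β} {s : Finset α} {p : α × α} :
    p ∈ collisionPairs f s ↔ (p.1 ∈ s ∧ p.2 ∈ s) ∧ f p.1 = f p.2 := by
  rw [collisionPairs, mem_filter, mem_product]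

lemma diag_subset_collisionPairs (f : α → β) (s : Finset α) :
    s.diag ⊆ collisionPairs f s := by
  rintro ⟨x, y⟩ hxy
  obtain ⟨hx, rfl : x = y⟩ := mem_diag.mp hxy
  exact mem_collisionPairs.mpr ⟨⟨hx, hx⟩, rfl⟩

lemma card_le_card_collisionPairs (f : α → β) (s : Finset α) :
    #s ≤ #(collisionPairs f s) := by
  simpa only [diag_card] using card_le_card (diag_subset_collisionPairs f s)

lemma collisionPairs_eq_diag_iff_injOn {f : α → β} {s : Finset α} :
    collisionPairs f s = s.diag ↔ Set.InjOn f s := by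
  constructor
  · intro h x hx y hy hxy
    have hmem : (x, y) ∈ collisionPairs f s := mem_collisionPairs.mpr ⟨⟨hx, hy⟩, hxy⟩
    rw [h] at hmem
    exact (mem_diag.mp hmem).2
  · refine fun hf ↦ (diag_subset_collisionPairs f s).antisymm' fun p hp ↦ ?_
    obtain ⟨⟨h₁, h₂⟩, heq⟩ := mem_collisionPairs.mp hp
    exact mem_diag.mpr ⟨h₁, hf h₁ h₂ heq⟩

lemma card_collisionPairs_eq_card_iff_injOn {f : α → β} {s : Finset α} :
    #(collisionPairs f s) = #s ↔ Set.InjOn f s := by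
  rw [← collisionPairs_eq_diag_iff_injOn, ← diag_card s]
  exact ⟨fun h ↦ (eq_of_subset_of_card_le (diag_subset_collisionPairs f s) h.le).symm,
    congrArg card⟩

end CollisionPairs

lemma integral_exp_two_pi_mul_I_mul_int (m : ℤ) :
    ∫ x in (0 : ℝ)..1, Complex.exp (2 * π * Complex.I * m * x) = if m = 0 then 1 else 0 := by
  split_ifs with hm
  · simp [hm]
  · have hc : 2 * π * Complex.I * m ≠ 0 :=
      mul_ne_zero Complex.two_pi_I_ne_zero (Int.cast_ne_zero.mpr hm)
    have hperiod : Complex.exp (2 * π * Complex.I * m) = 1 := by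
      rw [mul_comm, Complex.exp_int_mul_two_pi_mul_I]
    simp [integral_exp_mul_complex hc, hperiod]

lemma norm_sq_sum_exp_mul_I {α : Type*} (s : Finset α) (θ : α → ℝ) :
    ((‖∑ k ∈ s, Complex.exp (θ k * Complex.I)‖ ^ 2 : ℝ) : ℂ) =
      ∑ p ∈ s ×ˢ s, Complex.exp ((θ p.1 - θ p.2) * Complex.I) := by
  rw [Complex.ofReal_pow, ← Complex.mul_conj', map_sum, sum_mul_sum, ← sum_product']
  refine sum_congr rfl fun p _ ↦ ?_
  rw [← Complex.exp_conj, ← Complex.exp_add]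
  simp only [map_mul, Complex.conj_ofReal, Complex.conj_I]
  ring_nf

lemma integral_norm_sq_sum_exp_eq_card_collisionPairs {α : Type*} (s : Finset α) (f : α → ℤ) :
    ∫ x in (0 : ℝ)..1, ‖∑ k ∈ s, Complex.exp ((2 * π * f k * x : ℝ) * Complex.I)‖ ^ 2 =
      #(collisionPairs f s) := by
  have hexpand (x : ℝ) :
      ((‖∑ k ∈ s, Complex.exp ((2 * π * f k * x : ℝ) * Complex.I)‖ ^ 2 : ℝ) : ℂ) =
        ∑ p ∈ s ×ˢ s, Complex.exp (2 * π * Complex.I * (f p.1 - f p.2 : ℤ) * x) := by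
    rw [norm_sq_sum_exp_mul_I]
    refine sum_congr rfl fun p _ ↦ congrArg Complex.exp ?_
    push_cast
    ring
  apply Complex.ofReal_injective
  rw [← intervalIntegral.integral_ofReal]
  simp_rw [hexpand]
  rw [intervalIntegral.integral_finsetSum fun p _ ↦
    Continuous.intervalIntegrable (by fun_prop) 0 1]
  simp_rw [integral_exp_two_pi_mul_I_mul_int, sub_eq_zero]
  rw [sum_boole, collisionPairs, Complex.ofReal_natCast]

lemma cos_sq_eq_norm_one_add_exp_sq (θ : ℝ) :
    cos θ ^ 2 = ‖1 + Complex.exp ((2 * θ : ℝ) * Complex.I)‖ ^ 2 / 4 := by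
  rw [Complex.sq_norm, Complex.normSq_apply, Complex.add_re, Complex.add_im,
    Complex.exp_ofReal_mul_I_re, Complex.exp_ofReal_mul_I_im, Complex.one_re, Complex.one_im]
  linear_combination (-1 / 4) * sin_sq_add_cos_sq (2 * θ) - (1 / 2) * cos_two_mul θ

lemma prod_cos_sq_eq_norm_sum_exp_sq {ι : Type*} (s : Finset ι) (θ : ι → ℝ) :
    ∏ i ∈ s, cos (θ i) ^ 2 =
      ‖∑ S ∈ s.powerset, Complex.exp ((2 * ∑ i ∈ S, θ i : ℝ) * Complex.I)‖ ^ 2 / 4 ^ #s := by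
  simp_rw [cos_sq_eq_norm_one_add_exp_sq]
  rw [prod_div_distrib, prod_pow, ← norm_prod, prod_const, prod_one_add]
  simp_rw [← Complex.exp_sum, ← sum_mul, mul_sum, Complex.ofReal_sum]

section SubsetSums

variable {ι : Type*} [Fintype ι]

lemma integral_prod_cos_sq_eq_card_collisionPairs_div (a : ι → ℤ) :
    ∫ x in (0 : ℝ)..1, ∏ i, cos (2 * π * a i * x) ^ 2 =
      #(collisionPairs (fun S : Finset ι ↦ ∑ i ∈ S, a i) univ) / 4 ^ Fintype.card ι := by
  have hphase (S : Finset ι) (x : ℝ) :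
      2 * ∑ i ∈ S, 2 * π * a i * x = 2 * π * (2 * ∑ i ∈ S, a i : ℤ) * x := by
    push_cast
    rw [← sum_mul, ← mul_sum]
    ring
  have hdouble : collisionPairs (fun S : Finset ι ↦ 2 * ∑ i ∈ S, a i) univ =
      collisionPairs (fun S ↦ ∑ i ∈ S, a i) univ := by
    simp only [collisionPairs, mul_right_inj' (two_ne_zero' ℤ)]
  simp_rw [prod_cos_sq_eq_norm_sum_exp_sq, hphase, powerset_univ]
  rw [intervalIntegral.integral_div, integral_norm_sq_sum_exp_eq_card_collisionPairs, hdouble,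
    card_univ]

theorem stmt_1_general (a : ι → ℤ) :
    (1 / 2 ^ Fintype.card ι : ℝ) ≤ ∫ x in (0 : ℝ)..1, ∏ i, cos (2 * π * a i * x) ^ 2 ∧
    (∫ x in (0 : ℝ)..1, ∏ i, cos (2 * π * a i * x) ^ 2 = 1 / 2 ^ Fintype.card ι
      ↔ Function.Injective fun S : Finset ι ↦ ∑ i ∈ S, a i) := by
  have hdiag : (1 / 2 ^ Fintype.card ι : ℝ) =
      #(univ : Finset (Finset ι)) / 4 ^ Fintype.card ι := by
    rw [card_univ, Fintype.card_finset, Nat.cast_pow, Nat.cast_two, ← div_pow, ← one_div_pow]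
    norm_num
  have hpos : (0 : ℝ) < 4 ^ Fintype.card ι := by positivity
  rw [integral_prod_cos_sq_eq_card_collisionPairs_div, hdiag,
    div_le_div_iff_of_pos_right hpos, div_left_inj' hpos.ne', Nat.cast_le, Nat.cast_inj,
    card_collisionPairs_eq_card_iff_injOn, coe_univ, Set.injOn_univ]
  exact ⟨card_le_card_collisionPairs _ _, Iff.rfl⟩

end SubsetSums

lemma injective_sum_intCast_iff_distinctSums {n : ℕ} (a : Fin n → ℕ) :
    Function.Injective (fun S : Finset (Fin n) ↦ ∑ i ∈ S, (a i : ℤ)) ↔ DistinctSums a := by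
  simp only [DistinctSums, Function.Injective, ne_eq, not_imp_not, ← Nat.cast_sum, Nat.cast_inj]

theorem stmt_1 (n : ℕ) (hn : 0 < n) (a : Fin n → ℕ) (ha : ∀ i, 0 < a i) :
    (1 / 2 ^ n : ℝ) ≤
      ∫ x in (0:ℝ)..1, ∏ i, (Real.cos (2 * π * (a i : ℝ) * x)) ^ 2 ∧
    ((∫ x in (0:ℝ)..1, ∏ i, (Real.cos (2 * π * (a i : ℝ) * x)) ^ 2) = 1 / 2 ^ n
      ↔ DistinctSums a) := by
  simpa only [Fintype.card_fin, Int.cast_natCast, injective_sum_intCast_iff_distinctSums]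
    using stmt_1_general fun i ↦ (a i : ℤ)
end

section
/- For every ε > 0 there exists N such that for all n ≥ N and all families a : Fin n → ℝ of positive reals whose subset sums are 1-separated, the maximum element A = max_i a_i satisfies A ≥ (1 − ε) · √(2/π) · 2^n / √n. -/
open Real MeasureTheory Finset

/-!
Let `X` be the signed sum of the `a i` with independent uniform signs. By separation its `2 ^ n`
values are 2-separated, so the mean of a Gaussian `exp (-v X ^ 2 / 2)` is at most about
`2⁻ⁿ √(2 π / v) / 2`, the value for a uniform density. On the other hand
`exp (-v X ^ 2 / 2) = 𝔼 cos (t X)` for a centred Gaussian `t` of variance `v`, and the mean of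
`cos (t X)` over the signs is `∏ cos (t a i) ≈ exp (-t ^ 2 (∑ a i ^ 2) / 2)` up to fourth moments,
so the same mean is at least about `1 / √(1 + v ∑ a i ^ 2) ≥ 1 / √(1 + v n A ^ 2)`. Taking
`v = 1 / (ε n A ^ 2)` makes all errors vanish as `n → ∞` except for a factor `√(1 + ε)`.
-/

open ProbabilityTheory
open scoped NNReal

theorem norm_prod_sub_prod_le {ι R : Type*} [NormedCommRing R] [NormOneClass R] (s : Finset ι)
    {f g : ι → R} (hf : ∀ i ∈ s, ‖f i‖ ≤ 1) (hg : ∀ i ∈ s, ‖g i‖ ≤ 1) :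
    ‖∏ i ∈ s, f i - ∏ i ∈ s, g i‖ ≤ ∑ i ∈ s, ‖f i - g i‖ := by
  induction s using Finset.cons_induction with
  | empty => simp
  | cons j s hj ih =>
    rw [forall_mem_cons] at hf hg
    have hprod : ‖∏ i ∈ s, f i‖ ≤ 1 :=
      (Finset.norm_prod_le s f).trans (prod_le_one (fun _ _ ↦ norm_nonneg _) hf.2)
    calc ‖∏ i ∈ cons j s hj, f i - ∏ i ∈ cons j s hj, g i‖
        = ‖(f j - g j) * ∏ i ∈ s, f i + g j * (∏ i ∈ s, f i - ∏ i ∈ s, g i)‖ := by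
          rw [prod_cons, prod_cons]; ring_nf
      _ ≤ ‖f j - g j‖ * ‖∏ i ∈ s, f i‖ + ‖g j‖ * ‖∏ i ∈ s, f i - ∏ i ∈ s, g i‖ :=
          (norm_add_le _ _).trans (add_le_add (norm_mul_le _ _) (norm_mul_le _ _))
      _ ≤ ‖f j - g j‖ * 1 + 1 * ∑ i ∈ s, ‖f i - g i‖ := by
          gcongr
          exacts [hg.1, ih hf.2 hg.2]
      _ = ∑ i ∈ cons j s hj, ‖f i - g i‖ := by rw [mul_one, one_mul, sum_cons]

theorem exp_neg_le_quadratic {x : ℝ} (hx : 0 ≤ x) : exp (-x) ≤ 1 - x + x ^ 2 / 2 := by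
  have hpos : 0 < 1 + x + x ^ 2 / 2 := by positivity
  calc exp (-x) ≤ (1 + x + x ^ 2 / 2)⁻¹ := by
        rw [exp_neg]
        exact inv_anti₀ hpos (quadratic_le_exp_of_nonneg hx)
    _ ≤ 1 - x + x ^ 2 / 2 := by
        rw [inv_le_iff_one_le_mul₀ hpos]
        nlinarith [sq_nonneg (x ^ 2)]

theorem abs_cos_sub_exp_neg_sq_div_two_le (x : ℝ) : |cos x - exp (-(x ^ 2 / 2))| ≤ x ^ 4 / 2 := by
  have hx4 : 0 ≤ x ^ 4 := by positivity
  have hexp_lower := one_sub_le_exp_neg (x ^ 2 / 2)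
  have hexp_upper := exp_neg_le_quadratic (x := x ^ 2 / 2) (by positivity)
  refine abs_le.2 ⟨by linarith [one_sub_sq_div_two_le_cos (x := x)], ?_⟩
  rcases le_total |x| 1 with hx | hx
  · have hcos := (abs_le.1 (cos_bound hx)).2
    rw [Even.pow_abs (by decide)] at hcos
    linarith
  · have hx2 : 1 ≤ x ^ 2 := (one_le_sq_iff_one_le_abs x).2 hx
    nlinarith [cos_le_one x]

theorem abs_prod_cos_sub_exp_le {ι : Type*} [Fintype ι] (x : ι → ℝ) :
    |∏ i, cos (x i) - exp (-((∑ i, x i ^ 2) / 2))| ≤ (∑ i, x i ^ 4) / 2 := by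
  rw [sum_div, ← sum_neg_distrib, exp_sum]
  calc |∏ i, cos (x i) - ∏ i, exp (-(x i ^ 2 / 2))|
      ≤ ∑ i, |cos (x i) - exp (-(x i ^ 2 / 2))| := by
        refine norm_prod_sub_prod_le univ (f := fun i ↦ cos (x i))
          (fun i _ ↦ abs_cos_le_one _) fun i _ ↦ ?_
        rw [norm_of_nonneg (exp_pos _).le, exp_le_one_iff, neg_nonpos]
        positivity
    _ ≤ (∑ i, x i ^ 4) / 2 := by
        rw [sum_div]
        exact sum_le_sum fun i _ ↦ abs_cos_sub_exp_neg_sq_div_two_le (x i)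

theorem integral_cos_mul_gaussianReal (v : ℝ≥0) (x : ℝ) :
    ∫ t, cos (t * x) ∂gaussianReal 0 v = exp (-(v * x ^ 2 / 2)) := by
  have integrable_exp : Integrable (fun t : ℝ ↦ Complex.exp (x * t * Complex.I))
      (gaussianReal 0 v) := by
    refine Integrable.of_bound (by fun_prop) 1 (ae_of_all _ fun t ↦ ?_)
    exact_mod_cast (Complex.norm_exp_ofReal_mul_I (x * t)).le
  calc ∫ t, cos (t * x) ∂gaussianReal 0 v
      = ∫ t : ℝ, (Complex.exp (x * t * Complex.I)).re ∂gaussianReal 0 v := by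
        refine integral_congr_ae (ae_of_all _ fun t ↦ ?_)
        beta_reduce
        rw [← Complex.exp_ofReal_mul_I_re, mul_comm t, Complex.ofReal_mul]
    _ = (charFun (gaussianReal 0 v) x).re := by
        rw [charFun_apply_real]
        exact integral_re integrable_exp
    _ = exp (-(v * x ^ 2 / 2)) := by
        rw [charFun_gaussianReal, Complex.ofReal_zero, mul_zero, zero_mul, zero_sub]
        exact_mod_cast Complex.ofReal_re _

theorem integral_exp_neg_mul_sq_gaussianReal (v : ℝ≥0) {q : ℝ} (hq : 0 ≤ q) :
    ∫ t, exp (-(q * t ^ 2 / 2)) ∂gaussianReal 0 v = (√(1 + q * v))⁻¹ := by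
  rcases eq_or_ne v 0 with rfl | hv
  · simp
  have : (0 : ℝ) < v := NNReal.coe_pos.2 (pos_iff_ne_zero.2 hv)
  calc ∫ t, exp (-(q * t ^ 2 / 2)) ∂gaussianReal 0 v
      = (√(2 * π * v))⁻¹ * ∫ t : ℝ, exp (-((1 + q * v) / (2 * v)) * t ^ 2) := by
        simp only [integral_gaussianReal_eq_integral_smul hv, gaussianPDFReal, smul_eq_mul,
          mul_assoc, ← exp_add, integral_const_mul]
        congr! 4
        field_simp
        ring
    _ = (√(1 + q * v))⁻¹ := by
        rw [integral_gaussian, ← sqrt_inv, ← sqrt_inv, ← sqrt_mul (by positivity)]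
        congr 1
        field_simp

theorem integrable_pow_gaussianReal (v : ℝ≥0) (k : ℕ) :
    Integrable (fun t ↦ t ^ k) (gaussianReal 0 v) := by
  have hnorm := (memLp_id_gaussianReal (μ := 0) (v := v) k).integrable_norm_pow'
  exact hnorm.mono (by fun_prop) (by simp)

open scoped Nat in
theorem integral_pow_two_mul_gaussianReal (v : ℝ≥0) (k : ℕ) :
    ∫ t, t ^ (2 * k) ∂gaussianReal 0 v = (2 * k - 1 : ℕ)‼ * v ^ k := by
  rcases eq_or_ne v 0 with rfl | hv
  · cases k <;> simp
  have : (0 : ℝ) < v := NNReal.coe_pos.2 (pos_iff_ne_zero.2 hv)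
  let b : ℝ := (2 * v)⁻¹
  calc ∫ t, t ^ (2 * k) ∂gaussianReal 0 v
      = (√(2 * π * v))⁻¹ * ∫ t : ℝ, |t| ^ (2 * k : ℝ) * exp (-b * |t| ^ (2 : ℝ)) := by
        simp only [integral_gaussianReal_eq_integral_smul hv, gaussianPDFReal, smul_eq_mul,
          mul_assoc, integral_const_mul]
        refine congrArg _ (integral_congr_ae (ae_of_all _ fun t ↦ ?_))
        beta_reduce
        rw [rpow_ofNat, sq_abs, rpow_mul (abs_nonneg t), rpow_ofNat, sq_abs, rpow_natCast,
          ← pow_mul, mul_comm, sub_zero, neg_div, neg_mul, ← div_eq_inv_mul]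
    _ = (√(2 * π * v))⁻¹ * (b ^ (-(k + 1 / 2) : ℝ) * Gamma (k + 1 / 2)) := by
        rw [integral_comp_abs (f := fun t ↦ t ^ (2 * k : ℝ) * exp (-b * t ^ (2 : ℝ))),
          integral_rpow_mul_exp_neg_mul_rpow (by norm_num) (by linarith [k.cast_nonneg (α := ℝ)])
            (by positivity), show (2 * k + 1 : ℝ) / 2 = k + 1 / 2 by ring, neg_div,
            show (2 * k + 1 : ℝ) / 2 = k + 1 / 2 by ring]
        ring
    _ = (√(2 * π * v))⁻¹ * ((2 * v) ^ k * √(2 * v) * ((2 * k - 1 : ℕ)‼ * √π / 2 ^ k)) := by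
        rw [Gamma_nat_add_half, inv_rpow (by positivity), ← rpow_neg (by positivity), neg_neg,
          rpow_add (by positivity), rpow_natCast, sqrt_eq_rpow (2 * v)]
    _ = (2 * k - 1 : ℕ)‼ * v ^ k := by
        rw [show 2 * π * v = 2 * v * π by ring, sqrt_mul (by positivity), mul_pow]
        field_simp

theorem mul_exp_neg_mul_sq_le_integral (b x : ℝ) {r : ℝ} (hr : 0 < r) :
    r * exp (-b * (x ^ 2 + r ^ 2 / 12)) ≤
      ∫ y in Set.Ioc (x - r / 2) (x + r / 2), exp (-b * y ^ 2) := by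
  have hlen : x + r / 2 - (x - r / 2) = r := by ring
  have hIoc : Set.Ioc (x - r / 2) (x + r / 2) = Set.uIoc (x - r / 2) (x + r / 2) :=
    (Set.uIoc_of_le (by linarith)).symm
  have average_sq : ⨍ y in (x - r / 2)..(x + r / 2), -b * y ^ 2 = -b * (x ^ 2 + r ^ 2 / 12) := by
    rw [interval_average_eq_div, intervalIntegral.integral_const_mul, integral_pow, hlen,
      div_eq_iff hr.ne']
    push_cast
    ring
  have jensen := convexOn_exp.map_set_average_le (μ := volume)
    (t := Set.Ioc (x - r / 2) (x + r / 2)) (f := fun y ↦ -b * y ^ 2)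
    continuous_exp.continuousOn isClosed_univ (by simp [hr]) (by simp) (by simp)
    (Continuous.integrableOn_Ioc (by fun_prop)) (Continuous.integrableOn_Ioc (by fun_prop))
  rw [hIoc, average_sq, interval_average_eq_div, hlen, le_div_iff₀ hr, mul_comm] at jensen
  rwa [← intervalIntegral.integral_of_le (by linarith)]

theorem sum_exp_neg_mul_sq_le_of_separated {ι : Type*} [Fintype ι] {x : ι → ℝ} {r b : ℝ}
    (hr : 0 < r) (hb : 0 < b) (hx : Pairwise fun i j ↦ r ≤ |x i - x j|) :
    ∑ i, exp (-b * x i ^ 2) ≤ exp (b * r ^ 2 / 12) * (√(π / b) / r) := by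
  have hint := integrable_exp_neg_mul_sq hb
  have hdisj : Pairwise (Function.onFun Disjoint fun i ↦ Set.Ioc (x i - r / 2) (x i + r / 2)) := by
    refine fun i j hij ↦ Set.disjoint_left.2 fun y hyi hyj ↦ ?_
    rcases le_abs.1 (hx hij) with h | h <;> linarith [hyi.1, hyi.2, hyj.1, hyj.2]
  have sum_le : ∑ i, r * exp (-b * (x i ^ 2 + r ^ 2 / 12)) ≤ √(π / b) := by
    calc _ ≤ ∑ i, ∫ y in Set.Ioc (x i - r / 2) (x i + r / 2), exp (-b * y ^ 2) :=
          sum_le_sum fun i _ ↦ mul_exp_neg_mul_sq_le_integral b (x i) hr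
      _ = ∫ y in ⋃ i, Set.Ioc (x i - r / 2) (x i + r / 2), exp (-b * y ^ 2) :=
          (integral_iUnion_fintype (fun _ ↦ measurableSet_Ioc) hdisj
            fun _ ↦ hint.integrableOn).symm
      _ ≤ ∫ y, exp (-b * y ^ 2) :=
          setIntegral_le_integral hint (ae_of_all _ fun y ↦ (exp_pos _).le)
      _ = √(π / b) := integral_gaussian b
  calc ∑ i, exp (-b * x i ^ 2)
      = exp (b * r ^ 2 / 12) * ((∑ i, r * exp (-b * (x i ^ 2 + r ^ 2 / 12))) / r) := by
        rw [← mul_sum, mul_div_cancel_left₀ _ hr.ne', mul_sum]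
        refine sum_congr rfl fun i _ ↦ ?_
        rw [← exp_add]
        ring_nf
    _ ≤ exp (b * r ^ 2 / 12) * (√(π / b) / r) := by gcongr

section SignedSum

variable {ι : Type*} [Fintype ι] [DecidableEq ι]

/-- The sum `∑ i, ± a i`, with the sign `+` exactly for the indices in `S`. As `S` runs over all
subsets, these are the values of the random sum of the `a i` with independent uniform signs. -/
noncomputable def signedSum (a : ι → ℝ) (S : Finset ι) : ℝ :=
  ∑ i ∈ S, a i - ∑ i ∈ Sᶜ, a i

theorem sum_cos_signedSum (a : ι → ℝ) (t : ℝ) :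
    ∑ S : Finset ι, cos (t * signedSum a S) = 2 ^ Fintype.card ι * ∏ i, cos (t * a i) := by
  have expand : ∏ i, 2 * Complex.cos (t * a i) =
      ∑ S : Finset ι, Complex.exp ((t * signedSum a S : ℝ) * Complex.I) := by
    simp only [Complex.two_cos, Fintype.prod_add, ← Complex.exp_sum, ← Complex.exp_add]
    refine sum_congr rfl fun S _ ↦ congrArg Complex.exp ?_
    push_cast [signedSum, mul_sub, sub_mul, mul_sum, sum_mul, neg_mul, sum_neg_distrib]
    exact (sub_eq_add_neg _ _).symm
  apply_fun Complex.re at expand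
  rw [prod_mul_distrib, prod_const, card_univ, Complex.re_sum] at expand
  simp only [Complex.exp_ofReal_mul_I_re] at expand
  rw [← expand]
  exact_mod_cast (Complex.ofReal_re _).symm

theorem two_pow_mul_inv_sqrt_sub_le_sum_exp (a : ι → ℝ) (v : ℝ≥0) :
    2 ^ Fintype.card ι * ((√(1 + (∑ i, a i ^ 2) * v))⁻¹ - 3 / 2 * (∑ i, a i ^ 4) * v ^ 2) ≤
      ∑ S, exp (-(v * signedSum a S ^ 2 / 2)) := by
  have integrable_exp : Integrable (fun t : ℝ ↦ exp (-((∑ i, a i ^ 2) * t ^ 2 / 2)))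
      (gaussianReal 0 v) := by
    refine Integrable.of_bound (by fun_prop) 1 (ae_of_all _ fun t ↦ ?_)
    rw [norm_of_nonneg (exp_pos _).le, exp_le_one_iff, neg_nonpos]
    positivity
  have integrable_cos (x : ℝ) : Integrable (fun t : ℝ ↦ cos (t * x)) (gaussianReal 0 v) :=
    Integrable.of_bound (by fun_prop) 1 (ae_of_all _ fun t ↦ abs_cos_le_one _)
  have integrable_pow : Integrable (fun t : ℝ ↦ (∑ i, a i ^ 4) / 2 * t ^ 4) (gaussianReal 0 v) :=
    (integrable_pow_gaussianReal v 4).const_mul _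
  have prod_cos_lower (t : ℝ) : exp (-((∑ i, a i ^ 2) * t ^ 2 / 2)) - (∑ i, a i ^ 4) / 2 * t ^ 4 ≤
      ∏ i, cos (t * a i) := by
    have h := (abs_le.1 (abs_prod_cos_sub_exp_le fun i ↦ t * a i)).1
    simp only [mul_pow, ← mul_sum] at h
    rw [mul_comm (∑ i, a i ^ 2)]
    linarith
  calc 2 ^ Fintype.card ι * ((√(1 + (∑ i, a i ^ 2) * v))⁻¹ - 3 / 2 * (∑ i, a i ^ 4) * v ^ 2)
      = ∫ t, 2 ^ Fintype.card ι * (exp (-((∑ i, a i ^ 2) * t ^ 2 / 2)) -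
          (∑ i, a i ^ 4) / 2 * t ^ 4) ∂gaussianReal 0 v := by
        rw [integral_const_mul, integral_sub integrable_exp integrable_pow, integral_const_mul,
          integral_exp_neg_mul_sq_gaussianReal v (by positivity),
          integral_pow_two_mul_gaussianReal v 2]
        norm_num [Nat.doubleFactorial]
        ring
    _ ≤ ∫ t, ∑ S, cos (t * signedSum a S) ∂gaussianReal 0 v := by
        refine integral_mono ((integrable_exp.sub integrable_pow).const_mul _)
          (integrable_finsetSum _ fun S _ ↦ integrable_cos _) fun t ↦ ?_
        simp only [sum_cos_signedSum]
        gcongr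
        exact prod_cos_lower t
    _ = ∑ S, exp (-(v * signedSum a S ^ 2 / 2)) := by
        rw [integral_finsetSum _ fun S _ ↦ integrable_cos _]
        exact sum_congr rfl fun S _ ↦ integral_cos_mul_gaussianReal v _

end SignedSum

theorem SepSums.one_le_abs {n : ℕ} {a : Fin n → ℝ} (ha : SepSums a) (i : Fin n) : 1 ≤ |a i| := by
  simpa using ha {i} ∅ (singleton_ne_empty i)

theorem SepSums.two_le_abs_signedSum_sub {n : ℕ} {a : Fin n → ℝ} (ha : SepSums a) :
    Pairwise fun S T ↦ 2 ≤ |signedSum a S - signedSum a T| := by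
  intro S T hST
  have hdiff : signedSum a S - signedSum a T = 2 * (∑ i ∈ S, a i - ∑ i ∈ T, a i) := by
    have hS := sum_add_sum_compl S a
    have hT := sum_add_sum_compl T a
    simp only [signedSum]
    linarith
  rw [hdiff, abs_mul, abs_two]
  linarith [ha S T hST]

theorem SepSums.sum_exp_signedSum_le {n : ℕ} {a : Fin n → ℝ} (ha : SepSums a) {v : ℝ}
    (hv : 0 < v) :
    ∑ S, exp (-(v * signedSum a S ^ 2 / 2)) ≤ exp (v / 6) * (√(2 * π / v) / 2) := by
  convert sum_exp_neg_mul_sq_le_of_separated two_pos (half_pos hv) ha.two_le_abs_signedSum_sub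
    using 3
  · ring
  · ring
  · rw [div_div_eq_mul_div, mul_comm]

theorem SepSums.two_pow_mul_sub_le {n : ℕ} (hn : 0 < n) {a : Fin n → ℝ} (ha : SepSums a) {A : ℝ}
    (hA : ∀ i, |a i| ≤ A) {ε : ℝ} (hε : 0 < ε) :
    2 ^ n * (√ε * (√(1 + ε))⁻¹ - 3 / 2 * (ε ^ 2)⁻¹ / n) ≤
      exp ((ε * n)⁻¹ / 6) * (A * √(2 * π * ε * n) / 2) := by
  have hA1 : 1 ≤ A := (ha.one_le_abs ⟨0, hn⟩).trans (hA _)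
  have : (0 : ℝ) < n := Nat.cast_pos.2 hn
  have sum_pow_le (k : ℕ) (hk : Even k) : ∑ i, a i ^ k ≤ n * A ^ k := by
    simpa using sum_le_card_nsmul univ (fun i ↦ a i ^ k) (A ^ k) fun i _ ↦
      hk.pow_abs (a i) ▸ pow_le_pow_left₀ (abs_nonneg _) (hA i) k
  obtain ⟨v, hv⟩ : ∃ v : ℝ≥0, (v : ℝ) = (ε * n * A ^ 2)⁻¹ := ⟨⟨_, by positivity⟩, rfl⟩
  have hv0 : (0 : ℝ) < v := hv ▸ by positivity
  calc 2 ^ n * (√ε * (√(1 + ε))⁻¹ - 3 / 2 * (ε ^ 2)⁻¹ / n)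
      = 2 ^ n * ((√(1 + n * A ^ 2 * v))⁻¹ - 3 / 2 * (n * A ^ 4) * v ^ 2) := by
        rw [hv, ← sqrt_inv, ← sqrt_inv, ← sqrt_mul hε.le]
        congr 2
        · congr 1
          field_simp
          ring
        · field_simp
    _ ≤ 2 ^ n * ((√(1 + (∑ i, a i ^ 2) * v))⁻¹ - 3 / 2 * (∑ i, a i ^ 4) * v ^ 2) := by
        gcongr
        · exact sum_pow_le 2 even_two
        · exact sum_pow_le 4 (by decide)
    _ ≤ ∑ S, exp (-(v * signedSum a S ^ 2 / 2)) := by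
        simpa using two_pow_mul_inv_sqrt_sub_le_sum_exp a v
    _ ≤ exp (v / 6) * (√(2 * π / v) / 2) := ha.sum_exp_signedSum_le hv0
    _ ≤ exp ((ε * n)⁻¹ / 6) * (A * √(2 * π * ε * n) / 2) := by
        have hsqrt : √(2 * π / v) = A * √(2 * π * ε * n) := by
          rw [hv, div_inv_eq_mul, ← mul_assoc, ← mul_assoc, sqrt_mul' _ (sq_nonneg A),
            sqrt_sq (by positivity), mul_comm]
        have hv_le : (v : ℝ) ≤ (ε * n)⁻¹ := hv ▸ inv_anti₀ (by positivity)
          (le_mul_of_one_le_right (by positivity) (one_le_pow₀ hA1))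
        rw [hsqrt]
        gcongr

/-- The fraction of `√(2 / π) * 2 ^ n / √n` guaranteed as a lower bound for `A = max |a i|` by
smoothing with a Gaussian whose variance is `ε` times the bound `n * A ^ 2` on the variance of the
signed sum. -/
noncomputable def lowerRatio (ε : ℝ) (n : ℕ) : ℝ :=
  ((√(1 + ε))⁻¹ - 3 / 2 * (ε ^ 2 * √ε)⁻¹ / n) / exp ((ε * n)⁻¹ / 6)

open Filter Topology in
theorem tendsto_lowerRatio {ε : ℝ} (hε : 0 < ε) :
    Tendsto (lowerRatio ε) atTop (𝓝 (√(1 + ε))⁻¹) := by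
  have harg : Tendsto (fun n : ℕ ↦ (ε * n)⁻¹ / 6) atTop (𝓝 (0 / 6)) :=
    (tendsto_inv_atTop_zero.comp
      (tendsto_natCast_atTop_atTop.const_mul_atTop hε)).div_const (6 : ℝ)
  have hnum : Tendsto (fun n : ℕ ↦ (√(1 + ε))⁻¹ - 3 / 2 * (ε ^ 2 * √ε)⁻¹ / n) atTop
      (𝓝 ((√(1 + ε))⁻¹ - 0)) :=
    tendsto_const_nhds.sub (tendsto_const_div_atTop_nhds_zero_nat _)
  have hlim := hnum.div harg.rexp (exp_pos _).ne'
  rwa [sub_zero, zero_div, exp_zero, div_one] at hlim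

theorem SepSums.lowerRatio_mul_le {n : ℕ} (hn : 0 < n) {a : Fin n → ℝ} (ha : SepSums a) {A : ℝ}
    (hA : ∀ i, |a i| ≤ A) {ε : ℝ} (hε : 0 < ε) :
    lowerRatio ε n * (√(2 / π) * 2 ^ n / √n) ≤ A := by
  have : (0 : ℝ) < n := Nat.cast_pos.2 hn
  have hsqrt : √(2 * π * ε * n) / 2 = √ε * √n / √(2 / π) := by
    rw [sqrt_mul (by positivity), sqrt_mul (by positivity), sqrt_mul zero_le_two,
      sqrt_div zero_le_two]
    field_simp
    rw [sq_sqrt zero_le_two]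
  have key := ha.two_pow_mul_sub_le hn hA hε
  calc lowerRatio ε n * (√(2 / π) * 2 ^ n / √n)
      = 2 ^ n * (√ε * (√(1 + ε))⁻¹ - 3 / 2 * (ε ^ 2)⁻¹ / n) /
        (exp ((ε * n)⁻¹ / 6) * (√ε * √n / √(2 / π))) := by
        rw [lowerRatio]
        field_simp
    _ ≤ A := by
        rw [div_le_iff₀ (by positivity), ← hsqrt]
        linarith

theorem one_sub_lt_inv_sqrt_one_add {ε : ℝ} (hε : 0 < ε) : 1 - ε < (√(1 + ε))⁻¹ := by
  calc 1 - ε < (1 + ε)⁻¹ := by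
        rw [← one_div, lt_div_iff₀ (by positivity)]
        nlinarith
    _ ≤ (√(1 + ε))⁻¹ := inv_anti₀ (by positivity) (sqrt_le_self_iff.2 (.inr (by linarith)))

theorem stmt_2_general (ε : ℝ) (hε : 0 < ε) :
    ∃ N : ℕ, ∀ n : ℕ, N ≤ n → ∀ a : Fin n → ℝ, SepSums a → ∀ A : ℝ, (∀ i, |a i| ≤ A) →
      (1 - ε) * √(2 / π) * 2 ^ n / √n ≤ A := by
  have hratio := (tendsto_lowerRatio hε).eventually_const_lt (one_sub_lt_inv_sqrt_one_add hε)
  obtain ⟨N, hN⟩ := Filter.eventually_atTop.1 (hratio.and (Filter.eventually_gt_atTop 0))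
  refine ⟨N, fun n hn a ha A hA ↦ ?_⟩
  obtain ⟨hlt, hn0⟩ := hN n hn
  calc (1 - ε) * √(2 / π) * 2 ^ n / √n = (1 - ε) * (√(2 / π) * 2 ^ n / √n) := by ring
    _ ≤ lowerRatio ε n * (√(2 / π) * 2 ^ n / √n) := by gcongr
    _ ≤ A := ha.lowerRatio_mul_le hn0 hA hε

theorem stmt_2 (ε : ℝ) (hε : 0 < ε) :
    ∃ N : ℕ, ∀ n : ℕ, N ≤ n → ∀ a : Fin n → ℝ, (∀ i, 0 < a i) →
      SepSums a → ∀ A : ℝ, IsGreatest (Set.range a) A →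
      (1 - ε) * Real.sqrt (2 / π) * 2 ^ n / Real.sqrt n ≤ A := by
  obtain ⟨N, hN⟩ := stmt_2_general ε hε
  exact ⟨N, fun n hn a hpos ha A hA ↦
    hN n hn a ha A fun i ↦ (abs_of_pos (hpos i)).trans_le (hA.2 ⟨i, rfl⟩)⟩
end

section
/- For all c > 0 and δ > 0 there exists N such that for all n ≥ N and all families a : Fin n → ℝ of positive reals whose subset sums are 1-separated and whose maximum A = max_i a_i satisfies A² ≤ c · n^{−1/2} · ∑_{i=1}^{n} a_i², one has ∫_{|x| ≤ 1/(4A)} | (sin(2πx)/(2πx)) · ∏_{i=1}^{n} cos(2π a_i x) − exp(−2π² x² ∑_{i=1}^{n} a_i²) |² dx ≤ δ · 2^{−n}. -/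
open Real MeasureTheory Finset

/-!
Put `V = ∑ aᵢ²` and `t = 2πx`. On the range of integration every `aᵢ t` lies in `[-π/2, π/2]`, where
`0 ≤ cos θ ≤ exp (-θ²/2) ≤ cos θ + θ⁴/8`, and `1 - t²/6 ≤ sin t / t ≤ 1`. Hence the integrand is the
square of a number between `0` and `exp (-t²V/2)` which is also
`O(t² + t⁴ ∑ aᵢ⁴) = (A²/V) · O(t²V + (t²V)²)`. Multiplying the two bounds and integrating the
resulting Gaussian gives `O((A²/V) · V^(-1/2))`.

The signed sums `∑ ±aᵢ` are `2ⁿ` points at mutual distance at least `2` whose mean square is `V`.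
Among such configurations an arithmetic progression centred at `0` has the least mean square,
`(4ⁿ - 1)/3`. So `V^(-1/2) = O(2⁻ⁿ)`, while `A²/V` tends to `0` by hypothesis.
-/

section Separated

variable {ι K : Type*} [CommRing K] [LinearOrder K] [IsStrictOrderedRing K]
  {s : Finset ι} {y : ι → K} {d : K}

lemma card_sub_one_mul_le_sub_of_separated {a b : K} (hne : s.Nonempty)
    (hsep : (s : Set ι).Pairwise fun i j ↦ d ≤ |y i - y j|)
    (hy : ∀ i ∈ s, y i ∈ Set.Icc a b) : ((#s : K) - 1) * d ≤ b - a := by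
  classical
  induction s using Finset.induction_on_max_value y generalizing b with
  | empty => exact absurd hne not_nonempty_empty
  | insert i s hi hmax ih =>
    have hyi := hy i (mem_insert_self i s)
    rw [card_insert_of_notMem hi, Nat.cast_add_one, add_sub_cancel_right]
    rcases s.eq_empty_or_nonempty with rfl | hs
    · simpa using hyi.1.trans hyi.2
    · have below : ∀ j ∈ s, y j ∈ Set.Icc a (y i - d) := fun j hj ↦ by
        have hgap : d ≤ |y i - y j| := hsep (mem_insert_self i s)
          (mem_insert_of_mem hj) (ne_of_mem_of_not_mem hj hi).symm
        rw [abs_of_nonneg (sub_nonneg.2 (hmax j hj))] at hgap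
        exact ⟨(hy j (mem_insert_of_mem hj)).1, by linarith⟩
      have := ih hs (hsep.mono (coe_subset.2 (subset_insert i s))) below
      linarith [hyi.2]

/- The induction removes the smallest and the largest point, which are at least `(N - 1) * d` apart;
`N * (N ^ 2 - 1)` grows by `6 * (N - 1) ^ 2` from `N - 2` to `N`. -/
lemma sq_mul_card_mul_card_sq_sub_one_le_sum_sq_of_separated (hd : 0 ≤ d)
    (hsep : (s : Set ι).Pairwise fun i j ↦ d ≤ |y i - y j|) :
    d ^ 2 * (#s * ((#s : K) ^ 2 - 1)) ≤ 12 * ∑ i ∈ s, y i ^ 2 := by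
  classical
  induction hN : #s using Nat.twoStepInduction generalizing s with
  | zero => simpa using sum_nonneg fun i (_ : i ∈ s) ↦ sq_nonneg (y i)
  | one => simpa using sum_nonneg fun i (_ : i ∈ s) ↦ sq_nonneg (y i)
  | more N ih _ =>
    have hne : s.Nonempty := card_pos.1 (by omega)
    obtain ⟨p, hp, hmax⟩ := s.exists_max_image y hne
    have hNp : #(s.erase p) = N + 1 := by rw [card_erase_of_mem hp, hN]; rfl
    obtain ⟨q, hq, hmin⟩ := (s.erase p).exists_min_image y (card_pos.1 (by omega))
    have hNq : #((s.erase p).erase q) = N := by rw [card_erase_of_mem hq, hNp]; rfl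
    have hIcc : ∀ i ∈ s, y i ∈ Set.Icc (y q) (y p) := fun i hi ↦ by
      refine ⟨?_, hmax i hi⟩
      rcases eq_or_ne i p with rfl | hip
      · exact hmax q (mem_of_mem_erase hq)
      · exact hmin i (mem_erase.2 ⟨hip, hi⟩)
    have hspread : ((N : K) + 1) * d ≤ y p - y q := by
      have := card_sub_one_mul_le_sub_of_separated hne hsep hIcc
      rw [hN] at this
      push_cast at this
      linarith
    have hends : (((N : K) + 1) * d) ^ 2 ≤ 2 * (y p ^ 2 + y q ^ 2) :=
      calc (((N : K) + 1) * d) ^ 2 ≤ (y p - y q) ^ 2 := by gcongr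
        _ ≤ 2 * (y p ^ 2 + y q ^ 2) := by linarith [sq_nonneg (y p + y q)]
    have hinner := ih (s := (s.erase p).erase q)
      (hsep.mono (coe_subset.2 ((erase_subset _ _).trans (erase_subset _ _)))) hNq
    rw [← add_sum_erase s _ hp, ← add_sum_erase (s.erase p) _ hq]
    push_cast
    linarith

end Separated

lemma sum_powerset_two_mul_sum_sub_sum_sq {ι R : Type*} [CommRing R] (s : Finset ι) (a : ι → R) :
    ∑ S ∈ s.powerset, (2 * ∑ i ∈ S, a i - ∑ i ∈ s, a i) ^ 2 = 2 ^ #s * ∑ i ∈ s, a i ^ 2 := by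
  classical
  induction s using Finset.induction_on with
  | empty => simp
  | insert i s hi ih =>
    have pair : ∀ S ∈ s.powerset,
        (2 * ∑ j ∈ S, a j - (a i + ∑ j ∈ s, a j)) ^ 2 +
          (2 * ∑ j ∈ insert i S, a j - (a i + ∑ j ∈ s, a j)) ^ 2 =
        2 * (2 * ∑ j ∈ S, a j - ∑ j ∈ s, a j) ^ 2 + 2 * a i ^ 2 := fun S hS ↦ by
      rw [sum_insert fun h ↦ hi (mem_powerset.1 hS h)]
      ring
    rw [sum_powerset_insert hi, sum_insert hi, sum_insert hi, card_insert_of_notMem hi,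
      ← sum_add_distrib, sum_congr rfl pair, sum_add_distrib, ← mul_sum, ih, sum_const,
      card_powerset, nsmul_eq_mul]
    push_cast
    ring

namespace SepSums

variable {n : ℕ} {a : Fin n → ℝ}

lemma one_le_abs_s5 (ha : SepSums a) (i : Fin n) : 1 ≤ |a i| := by
  simpa using ha {i} ∅ (singleton_ne_empty i)

lemma sum_sq_pos (ha : SepSums a) (hn : 0 < n) : 0 < ∑ i, a i ^ 2 :=
  sum_pos (fun i _ ↦ sq_pos_of_ne_zero <| abs_pos.1 <| one_pos.trans_le (ha.one_le_abs_s5 i))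
    ⟨⟨0, hn⟩, mem_univ _⟩

lemma four_pow_sub_one_le_sum_sq (ha : SepSums a) : (4 : ℝ) ^ n - 1 ≤ 3 * ∑ i, a i ^ 2 := by
  have hsep : ((univ : Finset (Finset (Fin n))) : Set (Finset (Fin n))).Pairwise fun S T ↦
      2 ≤ |(2 * ∑ i ∈ S, a i - ∑ i, a i) - (2 * ∑ i ∈ T, a i - ∑ i, a i)| := fun S _ T _ hST ↦ by
    simp only [sub_sub_sub_cancel_right, ← mul_sub, abs_mul, abs_two]
    linarith [ha S T hST]
  have hspread := sq_mul_card_mul_card_sq_sub_one_le_sum_sq_of_separated zero_le_two hsep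
  have hsum := sum_powerset_two_mul_sum_sub_sum_sq univ a
  rw [powerset_univ] at hsum
  have hsq : ((2 : ℝ) ^ n) ^ 2 = 4 ^ n := by rw [pow_right_comm]; norm_num
  rw [hsum, card_univ, card_univ, Fintype.card_finset, Fintype.card_fin, Nat.cast_pow,
    Nat.cast_ofNat, hsq] at hspread
  refine le_of_mul_le_mul_left ?_ (show (0 : ℝ) < 2 ^ n by positivity)
  linarith

end SepSums

lemma cos_le_exp_neg_sq_div_two {x : ℝ} (hx : |x| ≤ 3 * π / 2) : cos x ≤ exp (-(x ^ 2 / 2)) := by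
  wlog h0 : 0 ≤ x generalizing x
  · simpa using this (x := -x) (by rwa [abs_neg]) (by linarith)
  rw [abs_of_nonneg h0] at hx
  rcases le_total (π / 2) x with h1 | h1
  · exact (cos_nonpos_of_pi_div_two_le_of_le h1 (by linarith)).trans (exp_pos _).le
  have hderiv (u : ℝ) : HasDerivAt (fun u ↦ cos u * exp (u ^ 2 / 2))
      ((u * cos u - sin u) * exp (u ^ 2 / 2)) u := by
    have hsq : HasDerivAt (fun u : ℝ ↦ u ^ 2 / 2) u u :=
      ((hasDerivAt_pow 2 u).div_const 2).congr_deriv (by simp)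
    exact ((hasDerivAt_cos u).mul hsq.exp).congr_deriv (by ring)
  have hanti : AntitoneOn (fun u ↦ cos u * exp (u ^ 2 / 2)) (Set.Icc 0 (π / 2)) := by
    refine antitoneOn_of_hasDerivWithinAt_nonpos (convex_Icc _ _)
      (fun u _ ↦ (hderiv u).continuousAt.continuousWithinAt)
      (fun u _ ↦ (hderiv u).hasDerivWithinAt) fun u hu ↦ ?_
    rw [interior_Icc] at hu
    have htan := le_tan hu.1.le hu.2
    rw [tan_eq_sin_div_cos, le_div_iff₀ (cos_pos_of_mem_Ioo ⟨by linarith [hu.1], hu.2⟩)] at htan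
    exact mul_nonpos_of_nonpos_of_nonneg (sub_nonpos.2 htan) (exp_pos _).le
  have hle : cos x * exp (x ^ 2 / 2) ≤ 1 := by
    simpa using hanti (Set.left_mem_Icc.2 (h0.trans h1)) ⟨h0, h1⟩ h0
  rwa [exp_neg, ← one_div, le_div_iff₀ (exp_pos _)]

lemma exp_neg_le_one_sub_add_sq_div_two {u : ℝ} (hu : 0 ≤ u) :
    exp (-u) ≤ 1 - u + u ^ 2 / 2 := by
  have hpos : 0 < 1 - u + u ^ 2 / 2 := by nlinarith [sq_nonneg (u - 1)]
  rw [exp_neg, inv_le_iff_one_le_mul₀ (exp_pos u)]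
  calc 1 ≤ (1 - u + u ^ 2 / 2) * (1 + u + u ^ 2 / 2) := by nlinarith [sq_nonneg (u ^ 2)]
    _ ≤ (1 - u + u ^ 2 / 2) * exp u := by gcongr; exact quadratic_le_exp_of_nonneg hu

lemma exp_neg_sq_div_two_sub_cos_le (x : ℝ) : exp (-(x ^ 2 / 2)) - cos x ≤ x ^ 4 / 8 := by
  have hexp := exp_neg_le_one_sub_add_sq_div_two (u := x ^ 2 / 2) (by positivity)
  have hcos := one_sub_sq_div_two_le_cos (x := x)
  linarith

lemma sinc_nonneg {x : ℝ} (hx : |x| ≤ π) : 0 ≤ sinc x := by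
  wlog h0 : 0 ≤ x generalizing x
  · simpa using this (x := -x) (by rwa [abs_neg]) (by linarith)
  rcases h0.eq_or_lt with rfl | h0
  · simp
  · rw [sinc_of_ne_zero h0.ne']
    exact div_nonneg (sin_nonneg_of_nonneg_of_le_pi h0.le ((le_abs_self x).trans hx)) h0.le

lemma one_sub_sq_div_six_le_sinc (x : ℝ) : 1 - x ^ 2 / 6 ≤ sinc x := by
  wlog h0 : 0 ≤ x generalizing x
  · simpa using this (-x) (by linarith)
  rcases h0.eq_or_lt with rfl | h0
  · simp
  · rw [sinc_of_ne_zero h0.ne', le_div_iff₀ h0]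
    linarith [sin_ge_sub_cube h0.le]

lemma prod_sub_prod_le_sum_sub {ι R : Type*} [CommRing R] [PartialOrder R] [IsOrderedRing R]
    {s : Finset ι} {f g : ι → R} (hf : ∀ i ∈ s, 0 ≤ f i) (hfg : ∀ i ∈ s, f i ≤ g i)
    (hg : ∀ i ∈ s, g i ≤ 1) : ∏ i ∈ s, g i - ∏ i ∈ s, f i ≤ ∑ i ∈ s, (g i - f i) := by
  classical
  induction s using Finset.induction_on with
  | empty => simp
  | insert i s hi ih =>
    simp only [forall_mem_insert] at hf hfg hg
    rw [prod_insert hi, prod_insert hi, sum_insert hi]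
    have hfs : ∏ j ∈ s, f j ≤ 1 :=
      prod_le_one hf.2 fun j hj ↦ (hfg.2 j hj).trans (hg.2 j hj)
    have hfgs : 0 ≤ ∏ j ∈ s, g j - ∏ j ∈ s, f j := sub_nonneg.2 (prod_le_prod hf.2 hfg.2)
    calc g i * ∏ j ∈ s, g j - f i * ∏ j ∈ s, f j
        = (g i - f i) * ∏ j ∈ s, f j + g i * (∏ j ∈ s, g j - ∏ j ∈ s, f j) := by ring
      _ ≤ (g i - f i) + (∏ j ∈ s, g j - ∏ j ∈ s, f j) :=
          add_le_add (mul_le_of_le_one_right (sub_nonneg.2 hfg.1) hfs)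
            (mul_le_of_le_one_left hfgs hg.1)
      _ ≤ (g i - f i) + ∑ j ∈ s, (g j - f j) := by gcongr; exact ih hf.2 hfg.2 hg.2

section GaussianApproximation

variable {ι : Type*} {s : Finset ι} {θ : ι → ℝ}

variable (s θ) in
lemma prod_exp_neg_sq_div_two :
    ∏ i ∈ s, exp (-(θ i ^ 2 / 2)) = exp (-((∑ i ∈ s, θ i ^ 2) / 2)) := by
  rw [← exp_sum, sum_neg_distrib, sum_div]

lemma prod_cos_nonneg (hθ : ∀ i ∈ s, |θ i| ≤ π / 2) : 0 ≤ ∏ i ∈ s, cos (θ i) :=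
  prod_nonneg fun i hi ↦ cos_nonneg_of_mem_Icc (abs_le.1 (hθ i hi))

lemma prod_cos_le_exp (hθ : ∀ i ∈ s, |θ i| ≤ π / 2) :
    ∏ i ∈ s, cos (θ i) ≤ exp (-((∑ i ∈ s, θ i ^ 2) / 2)) := by
  rw [← prod_exp_neg_sq_div_two]
  exact prod_le_prod (fun i hi ↦ cos_nonneg_of_mem_Icc (abs_le.1 (hθ i hi))) fun i hi ↦
    cos_le_exp_neg_sq_div_two (by linarith [hθ i hi, pi_pos])

lemma exp_sub_prod_cos_le (hθ : ∀ i ∈ s, |θ i| ≤ π / 2) :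
    exp (-((∑ i ∈ s, θ i ^ 2) / 2)) - ∏ i ∈ s, cos (θ i) ≤ (∑ i ∈ s, θ i ^ 4) / 8 := by
  rw [← prod_exp_neg_sq_div_two, sum_div]
  refine (prod_sub_prod_le_sum_sub ?_ ?_ ?_).trans
    (sum_le_sum fun i _ ↦ exp_neg_sq_div_two_sub_cos_le (θ i))
  · exact fun i hi ↦ cos_nonneg_of_mem_Icc (abs_le.1 (hθ i hi))
  · exact fun i hi ↦ cos_le_exp_neg_sq_div_two (by linarith [hθ i hi, pi_pos])
  · exact fun i _ ↦ exp_le_one_iff.2 (by linarith [sq_nonneg (θ i)])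

lemma exp_sub_sinc_mul_prod_cos_le (t : ℝ) (hθ : ∀ i ∈ s, |θ i| ≤ π / 2) :
    exp (-((∑ i ∈ s, θ i ^ 2) / 2)) - sinc t * ∏ i ∈ s, cos (θ i) ≤
      t ^ 2 / 6 + (∑ i ∈ s, θ i ^ 4) / 8 := by
  have hprod : ∏ i ∈ s, cos (θ i) ≤ 1 :=
    prod_le_one (fun i hi ↦ cos_nonneg_of_mem_Icc (abs_le.1 (hθ i hi))) fun i _ ↦ cos_le_one _
  have hsinc : (1 - sinc t) * ∏ i ∈ s, cos (θ i) ≤ t ^ 2 / 6 :=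
    (mul_le_of_le_one_right (sub_nonneg.2 (sinc_le_one t)) hprod).trans
      (by linarith [one_sub_sq_div_six_le_sinc t])
  linarith [exp_sub_prod_cos_le hθ]

lemma sq_sinc_mul_prod_cos_sub_exp_le {t : ℝ} (ht : |t| ≤ π) (hθ : ∀ i ∈ s, |θ i| ≤ π / 2) :
    (sinc t * ∏ i ∈ s, cos (θ i) - exp (-((∑ i ∈ s, θ i ^ 2) / 2))) ^ 2 ≤
      exp (-((∑ i ∈ s, θ i ^ 2) / 2)) * (t ^ 2 / 6 + (∑ i ∈ s, θ i ^ 4) / 8) := by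
  have hcos := prod_cos_nonneg hθ
  have hnonneg : 0 ≤ sinc t * ∏ i ∈ s, cos (θ i) := mul_nonneg (sinc_nonneg ht) hcos
  have hle : sinc t * ∏ i ∈ s, cos (θ i) ≤ exp (-((∑ i ∈ s, θ i ^ 2) / 2)) :=
    (mul_le_of_le_one_left hcos (sinc_le_one t)).trans (prod_cos_le_exp hθ)
  rw [← neg_sub, neg_sq, sq]
  exact mul_le_mul (sub_le_self _ hnonneg) (exp_sub_sinc_mul_prod_cos_le t hθ)
    (sub_nonneg.2 hle) (exp_pos _).le

end GaussianApproximation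

lemma exp_neg_mul_add_sq_le {w : ℝ} (hw : 0 ≤ w) :
    exp (-w) * (w / 3 + w ^ 2 / 2) ≤ 4 * exp (-(w / 2)) := by
  have hquad : w / 3 + w ^ 2 / 2 ≤ 4 * exp (w / 2) := by
    linarith [quadratic_le_exp_of_nonneg (div_nonneg hw zero_le_two)]
  calc exp (-w) * (w / 3 + w ^ 2 / 2) ≤ exp (-w) * (4 * exp (w / 2)) := by gcongr
    _ = 4 * exp (-w + w / 2) := by rw [exp_add]; ring
    _ = 4 * exp (-(w / 2)) := by congr 2; ring

section LinearFrequencies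

variable {ι : Type*} {s : Finset ι} {a : ι → ℝ} {A : ℝ}

lemma sq_sinc_mul_prod_cos_mul_sub_exp_le {t : ℝ} (hA : 1 ≤ A) (ha : ∀ i ∈ s, |a i| ≤ A)
    (hV : 0 < ∑ i ∈ s, a i ^ 2) (ht : A * |t| ≤ π / 2) :
    (sinc t * ∏ i ∈ s, cos (a i * t) - exp (-(t ^ 2 * (∑ i ∈ s, a i ^ 2) / 2))) ^ 2 ≤
      4 * (A ^ 2 / ∑ i ∈ s, a i ^ 2) * exp (-(t ^ 2 * (∑ i ∈ s, a i ^ 2) / 4)) := by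
  have hθ : ∀ i ∈ s, |a i * t| ≤ π / 2 := fun i hi ↦ by
    rw [abs_mul]
    exact (mul_le_mul_of_nonneg_right (ha i hi) (abs_nonneg t)).trans ht
  have ht' : |t| ≤ π := by
    linarith [le_mul_of_one_le_left (abs_nonneg t) hA, pi_pos]
  have hsq : ∑ i ∈ s, (a i * t) ^ 2 = t ^ 2 * ∑ i ∈ s, a i ^ 2 := by
    simp only [mul_pow, ← sum_mul, mul_comm (t ^ 2)]
  have hfourth : ∑ i ∈ s, (a i * t) ^ 4 ≤ A ^ 2 * t ^ 4 * ∑ i ∈ s, a i ^ 2 := by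
    rw [mul_sum]
    refine sum_le_sum fun i hi ↦ ?_
    calc (a i * t) ^ 4 = a i ^ 2 * t ^ 4 * a i ^ 2 := by ring
      _ ≤ A ^ 2 * t ^ 4 * a i ^ 2 := by
          gcongr ?_ * _ * _
          exact sq_le_sq.2 ((ha i hi).trans (le_abs_self A))
  have hbound := sq_sinc_mul_prod_cos_sub_exp_le ht' hθ
  rw [hsq] at hbound
  set V := ∑ i ∈ s, a i ^ 2
  set w := t ^ 2 * V / 2 with hw
  have hA2 : t ^ 2 ≤ A ^ 2 * t ^ 2 := le_mul_of_one_le_left (sq_nonneg t) (one_le_pow₀ hA)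
  calc (sinc t * ∏ i ∈ s, cos (a i * t) - exp (-w)) ^ 2
      ≤ exp (-w) * (t ^ 2 / 6 + (∑ i ∈ s, (a i * t) ^ 4) / 8) := hbound
    _ ≤ exp (-w) * (A ^ 2 * t ^ 2 / 6 + A ^ 2 * t ^ 4 * V / 8) := by gcongr
    _ = A ^ 2 / V * (exp (-w) * (w / 3 + w ^ 2 / 2)) := by rw [hw]; field_simp; ring
    _ ≤ A ^ 2 / V * (4 * exp (-(w / 2))) := by
        gcongr ?_ * ?_
        exact exp_neg_mul_add_sq_le (by positivity)
    _ = 4 * (A ^ 2 / V) * exp (-(t ^ 2 * V / 4)) := by rw [hw]; ring_nf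

lemma setIntegral_sq_sinc2pi_mul_prod_cos_sub_exp_le (hA : 1 ≤ A) (ha : ∀ i ∈ s, |a i| ≤ A)
    (hV : 0 < ∑ i ∈ s, a i ^ 2) :
    (∫ x in {x : ℝ | |x| ≤ 1 / (4 * A)},
        |sinc2pi x * ∏ i ∈ s, cos (2 * π * a i * x) -
          exp (-2 * π ^ 2 * x ^ 2 * ∑ i ∈ s, a i ^ 2)| ^ 2) ≤
      4 * (A ^ 2 / ∑ i ∈ s, a i ^ 2) / √(π * ∑ i ∈ s, a i ^ 2) := by
  set V := ∑ i ∈ s, a i ^ 2 with hVdef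
  have hmeas : MeasurableSet {x : ℝ | |x| ≤ 1 / (4 * A)} :=
    measurableSet_le measurable_id.abs measurable_const
  have hint : Integrable fun x : ℝ ↦ 4 * (A ^ 2 / V) * exp (-(π ^ 2 * V) * x ^ 2) :=
    (integrable_exp_neg_mul_sq (by positivity)).const_mul _
  have hpoint : ∀ x ∈ {x : ℝ | |x| ≤ 1 / (4 * A)},
      |sinc2pi x * ∏ i ∈ s, cos (2 * π * a i * x) - exp (-2 * π ^ 2 * x ^ 2 * V)| ^ 2 ≤
        4 * (A ^ 2 / V) * exp (-(π ^ 2 * V) * x ^ 2) := fun x hx ↦ by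
    have ht : A * |2 * π * x| ≤ π / 2 := by
      rw [Set.mem_ofPred_eq, le_div_iff₀ (by positivity)] at hx
      rw [abs_mul, abs_of_pos two_pi_pos]
      linarith [mul_le_mul_of_nonneg_left hx pi_pos.le]
    convert sq_sinc_mul_prod_cos_mul_sub_exp_le hA ha hV ht using 1
    · rw [sq_abs, sinc2pi_eq_sinc, ← hVdef]
      ring_nf
    · rw [← hVdef]
      ring_nf
  calc _ ≤ ∫ x in {x : ℝ | |x| ≤ 1 / (4 * A)}, 4 * (A ^ 2 / V) * exp (-(π ^ 2 * V) * x ^ 2) :=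
        integral_mono_of_nonneg (.of_forall fun x ↦ by positivity) hint.integrableOn
          (ae_restrict_of_forall_mem hmeas hpoint)
    _ ≤ ∫ x, 4 * (A ^ 2 / V) * exp (-(π ^ 2 * V) * x ^ 2) :=
        setIntegral_le_integral hint (.of_forall fun x ↦ by positivity)
    _ = 4 * (A ^ 2 / V) / √(π * V) := by
        rw [integral_const_mul, integral_gaussian, div_eq_mul_inv _ √_, ← sqrt_inv]
        congr 2
        field_simp

end LinearFrequencies

lemma SepSums.setIntegral_sq_sub_exp_le_two_rpow_neg {n : ℕ} {a : Fin n → ℝ} {A : ℝ}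
    (ha : SepSums a) (hn : 0 < n) (hA : ∀ i, |a i| ≤ A) :
    (∫ x in {x : ℝ | |x| ≤ 1 / (4 * A)},
        |sinc2pi x * ∏ i, cos (2 * π * a i * x) -
          exp (-2 * π ^ 2 * x ^ 2 * ∑ i, a i ^ 2)| ^ 2) ≤
      8 * (A ^ 2 / ∑ i, a i ^ 2) * 2 ^ (-(n : ℝ)) := by
  have hA1 : 1 ≤ A := (ha.one_le_abs_s5 ⟨0, hn⟩).trans (hA _)
  have hV4 : (4 : ℝ) ^ n ≤ 4 * ∑ i, a i ^ 2 := by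
    have : (4 : ℝ) ≤ 4 ^ n := le_self_pow₀ (by norm_num) hn.ne'
    linarith [ha.four_pow_sub_one_le_sum_sq]
  have hV := ha.sum_sq_pos hn
  refine (setIntegral_sq_sinc2pi_mul_prod_cos_sub_exp_le hA1 (fun i _ ↦ hA i) hV).trans ?_
  set V := ∑ i, a i ^ 2
  have hsqrt : (2 : ℝ) ^ n / 2 ≤ √(π * V) := by
    refine le_sqrt_of_sq_le ?_
    calc ((2 : ℝ) ^ n / 2) ^ 2 = 4 ^ n / 4 := by
          rw [div_pow, pow_right_comm]; norm_num
      _ ≤ 1 * V := by linarith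
      _ ≤ π * V := by gcongr; linarith [pi_gt_three]
  calc 4 * (A ^ 2 / V) / √(π * V) ≤ 4 * (A ^ 2 / V) / (2 ^ n / 2) := by gcongr
    _ = 8 * (A ^ 2 / V) * 2 ^ (-(n : ℝ)) := by
        rw [rpow_neg zero_le_two, rpow_natCast]
        field_simp
        norm_num

theorem stmt_5_general {ε : ℕ → ℝ} (hε : Filter.Tendsto ε Filter.atTop (nhds 0))
    {δ : ℝ} (hδ : 0 < δ) :
    ∃ N : ℕ, ∀ n : ℕ, N ≤ n → ∀ a : Fin n → ℝ,
      SepSums a → ∀ A : ℝ, IsGreatest (Set.range fun i ↦ |a i|) A →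
      A ^ 2 ≤ ε n * ∑ i, a i ^ 2 →
      (∫ x in {x : ℝ | |x| ≤ 1 / (4 * A)},
          |sinc2pi x * ∏ i, cos (2 * π * a i * x) -
            exp (-2 * π ^ 2 * x ^ 2 * ∑ i, a i ^ 2)| ^ 2) ≤
        δ * 2 ^ (-(n : ℝ)) := by
  obtain ⟨N, hN⟩ := Filter.eventually_atTop.1 <|
    hε.eventually_le_const (show 0 < δ / 8 by positivity)
  refine ⟨N, fun n hn a ha A ⟨⟨i, _⟩, hA⟩ hAε ↦ ?_⟩
  refine (ha.setIntegral_sq_sub_exp_le_two_rpow_neg i.pos fun j ↦ hA ⟨j, rfl⟩).trans ?_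
  have hratio : A ^ 2 / ∑ i, a i ^ 2 ≤ δ / 8 :=
    ((div_le_iff₀ (ha.sum_sq_pos i.pos)).2 hAε).trans (hN n hn)
  gcongr
  linarith

theorem stmt_5 (c δ : ℝ) (hc : 0 < c) (hδ : 0 < δ) :
    ∃ N : ℕ, ∀ n : ℕ, N ≤ n → ∀ a : Fin n → ℝ, (∀ i, 0 < a i) →
      SepSums a → ∀ A : ℝ, IsGreatest (Set.range a) A →
      A ^ 2 ≤ c * (n : ℝ) ^ (-(1/2) : ℝ) * ∑ i, (a i) ^ 2 →
      (∫ x in {x : ℝ | |x| ≤ 1 / (4 * A)},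
          |sinc2pi x * ∏ i, Real.cos (2 * π * a i * x) -
            Real.exp (-2 * π ^ 2 * x ^ 2 * ∑ i, (a i) ^ 2)| ^ 2) ≤
        δ * 2 ^ (-(n : ℝ)) := by
  have hε : Filter.Tendsto (fun n : ℕ ↦ c * (n : ℝ) ^ (-(1/2) : ℝ)) Filter.atTop (nhds 0) := by
    simpa using ((tendsto_rpow_neg_atTop one_half_pos).comp tendsto_natCast_atTop_atTop).const_mul c
  obtain ⟨N, hN⟩ := stmt_5_general hε hδ
  exact ⟨N, fun n hn a ha hs A hA ↦ hN n hn a hs A (by simpa only [abs_of_pos (ha _)] using hA)⟩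
end

section
/- Let n be a positive integer and let a : Fin n → ℝ have a i > 0 for all i, with 1-separated subset sums. Then the maximum element A = max_i a_i satisfies A ≥ √((4^n − 1)/(3n)). -/
open Real Finset

/-!
Write `σ S = ∑ i ∈ S, a i` and compare two evaluations of `∑ (σ S - σ T) ^ 2` over all pairs of
subsets. The cross terms cancel, so it equals `4 ^ n / 2 * ∑ a i ^ 2`. On the other hand, the `k`-th
and `l`-th smallest of the `N = 2 ^ n` subset sums differ by at least `|k - l|`, so it is at least
`∑ (k - l) ^ 2 = N ^ 2 * (N ^ 2 - 1) / 6`. Hence `(4 ^ n - 1) / 3 ≤ ∑ a i ^ 2 ≤ n * A ^ 2`.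
-/

section PairSums

variable {R : Type*} [CommRing R]

theorem six_mul_sum_range_sub_sq (N : ℕ) (c : R) :
    6 * ∑ i ∈ range N, ((i : R) - c) ^ 2 =
      N * (6 * c ^ 2 - 6 * c * (N - 1) + (N - 1) * (2 * N - 1)) := by
  induction N with
  | zero => simp
  | succ N ih =>
    rw [sum_range_succ, mul_add, ih]
    push_cast
    ring

theorem six_mul_sum_range_sum_range_sub_sq (N : ℕ) :
    6 * ∑ i ∈ range N, ∑ j ∈ range N, ((i : R) - j) ^ 2 = (N : R) ^ 2 * ((N : R) ^ 2 - 1) := by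
  induction N with
  | zero => simp
  | succ N ih =>
    have last_row : ∑ j ∈ range N, ((N : R) - j) ^ 2 = ∑ j ∈ range N, ((j : R) - N) ^ 2 :=
      sum_congr rfl fun j _ => sub_sq_comm _ _
    simp only [sum_range_succ, sum_add_distrib, mul_add, last_row, ih, six_mul_sum_range_sub_sq]
    push_cast
    ring

theorem sum_powerset_insert_apply_sum {ι M N : Type*} [DecidableEq ι] [AddCommMonoid M]
    [AddCommMonoid N] {x : ι} {U : Finset ι} (hx : x ∉ U) (a : ι → M) (f : M → N) :
    ∑ S ∈ (insert x U).powerset, f (∑ i ∈ S, a i) =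
      ∑ S ∈ U.powerset, f (∑ i ∈ S, a i) + ∑ S ∈ U.powerset, f (a x + ∑ i ∈ S, a i) := by
  rw [sum_powerset_insert hx]
  congr 1
  exact sum_congr rfl fun S hS => by rw [sum_insert fun h => hx (mem_powerset.1 hS h)]

-- The shift `c` is there for the induction: splitting on whether `x ∈ S` and `x ∈ T` replaces it by
-- `c`, `c + a x`, `c - a x` and `c`.
theorem two_mul_sum_powerset_sum_powerset_sub_add_sq {ι : Type*} (a : ι → R) (U : Finset ι)
    (c : R) :
    2 * ∑ S ∈ U.powerset, ∑ T ∈ U.powerset, (∑ i ∈ S, a i - ∑ i ∈ T, a i + c) ^ 2 =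
      4 ^ #U * (2 * c ^ 2 + ∑ i ∈ U, a i ^ 2) := by
  classical
  induction U using Finset.induction_on generalizing c with
  | empty => simp
  | insert x U hx ih =>
    have split_outer := sum_powerset_insert_apply_sum hx a fun s =>
      ∑ T ∈ (insert x U).powerset, (s - ∑ i ∈ T, a i + c) ^ 2
    have split_inner (s : R) := sum_powerset_insert_apply_sum hx a fun t => (s - t + c) ^ 2
    have shift_right (s t : R) : s - (a x + t) + c = s - t + (c - a x) := by ring
    have shift_left (s t d : R) : a x + s - t + d = s - t + (d + a x) := by ring
    rw [split_outer]
    simp only [split_inner, sum_add_distrib, mul_add (2 : R)]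
    simp only [shift_right, shift_left, ih]
    rw [card_insert_of_notMem hx, sum_insert hx]
    ring

end PairSums

section Separated

variable {R : Type*} [CommRing R] [LinearOrder R] [IsStrictOrderedRing R] {δ : R}

theorem monotone_sub_mul_of_separated {N : ℕ} {f : Fin N → R} (hf : Monotone f)
    (hsep : Pairwise fun i j => δ ≤ |f i - f j|) : Monotone fun i => f i - i * δ := by
  cases N with
  | zero => exact fun i => i.elim0
  | succ N =>
    refine Fin.monotone_iff_le_succ.2 fun i => ?_
    have gap : δ ≤ f i.succ - f i.castSucc := by
      rw [← abs_of_nonneg (sub_nonneg.2 (hf i.castSucc_le_succ))]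
      exact hsep i.castSucc_lt_succ.ne'
    simp only [Fin.val_castSucc, Fin.val_succ]
    push_cast
    linarith

theorem abs_sub_mul_le_abs_sub_of_separated {N : ℕ} {f : Fin N → R} (hf : Monotone f)
    (hsep : Pairwise fun i j => δ ≤ |f i - f j|) (i j : Fin N) :
    |(i : R) - j| * δ ≤ |f i - f j| := by
  wlog hji : j ≤ i generalizing i j
  · simpa only [abs_sub_comm] using this j i (le_of_not_ge hji)
  have hmono : f j - j * δ ≤ f i - i * δ := monotone_sub_mul_of_separated hf hsep hji
  have hji_cast : (j : R) ≤ i := by exact_mod_cast hji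
  rw [abs_of_nonneg (sub_nonneg.2 hji_cast), abs_of_nonneg (sub_nonneg.2 (hf hji))]
  linarith

theorem sq_mul_le_six_mul_sum_sum_sub_sq_of_separated {ι : Type*} [Fintype ι] {x : ι → R}
    (hδ : 0 ≤ δ) (hsep : Pairwise fun i j => δ ≤ |x i - x j|) :
    δ ^ 2 * ((Fintype.card ι : R) ^ 2 * ((Fintype.card ι : R) ^ 2 - 1)) ≤
      6 * ∑ i, ∑ j, (x i - x j) ^ 2 := by
  set N := Fintype.card ι
  obtain ⟨e, he⟩ : ∃ e : Fin N ≃ ι, Monotone (x ∘ e) :=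
    ⟨(Tuple.sort (x ∘ (Fintype.equivFin ι).symm)).trans (Fintype.equivFin ι).symm,
      Tuple.monotone_sort (x ∘ (Fintype.equivFin ι).symm)⟩
  calc δ ^ 2 * ((N : R) ^ 2 * ((N : R) ^ 2 - 1))
      = 6 * ∑ i : Fin N, ∑ j : Fin N, (((i : R) - j) * δ) ^ 2 := by
        rw [← six_mul_sum_range_sum_range_sub_sq]
        simp only [sum_range, mul_pow, ← sum_mul]
        ring
    _ ≤ 6 * ∑ i, ∑ j, (x (e i) - x (e j)) ^ 2 := by
        gcongr 6 * ∑ i, ∑ j, ?_ with i _ j _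
        rw [sq_le_sq, abs_mul, abs_of_nonneg hδ]
        exact abs_sub_mul_le_abs_sub_of_separated he (hsep.comp_of_injective e.injective) i j
    _ = 6 * ∑ i, ∑ j, (x i - x j) ^ 2 := by
        rw [← e.sum_comp]
        simp only [← e.sum_comp fun j => (x _ - x j) ^ 2]

theorem sq_mul_four_pow_card_sub_one_le_of_separated_sums {ι : Type*} [Fintype ι] {a : ι → R}
    (hδ : 0 ≤ δ) (hsep : Pairwise fun S T : Finset ι => δ ≤ |∑ i ∈ S, a i - ∑ i ∈ T, a i|) :
    δ ^ 2 * (4 ^ Fintype.card ι - 1) ≤ 3 * ∑ i, a i ^ 2 := by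
  have lower_bound := sq_mul_le_six_mul_sum_sum_sub_sq_of_separated hδ hsep
  have evaluation := two_mul_sum_powerset_sum_powerset_sub_add_sq a univ 0
  have card_sq : (Fintype.card (Finset ι) : R) ^ 2 = 4 ^ Fintype.card ι := by
    rw [Fintype.card_finset, Nat.cast_pow, pow_right_comm]
    norm_num
  simp only [powerset_univ, add_zero, card_univ] at evaluation
  rw [card_sq] at lower_bound
  refine le_of_mul_le_mul_left ?_ (by positivity : (0 : R) < 4 ^ Fintype.card ι)
  linarith

end Separated

theorem stmt_8 (n : ℕ) (hn : 0 < n) (a : Fin n → ℝ) (ha : ∀ i, 0 < a i)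
    (hsep : SepSums a) (A : ℝ) (hA : IsGreatest (Set.range a) A) :
    Real.sqrt (((4 : ℝ) ^ n - 1) / (3 * n)) ≤ A := by
  have ha_le (i : Fin n) : a i ≤ A := hA.2 ⟨i, rfl⟩
  have hA_nonneg : 0 ≤ A := (ha ⟨0, hn⟩).le.trans (ha_le _)
  refine Real.sqrt_le_iff.2 ⟨hA_nonneg, ?_⟩
  rw [div_le_iff₀ (by positivity)]
  calc (4 : ℝ) ^ n - 1
      ≤ 3 * ∑ i, a i ^ 2 := by
        simpa using sq_mul_four_pow_card_sub_one_le_of_separated_sums zero_le_one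
          fun S T hST => hsep S T hST
    _ ≤ 3 * ∑ _i : Fin n, A ^ 2 := by
        gcongr with i
        exacts [(ha i).le, ha_le i]
    _ = A ^ 2 * (3 * n) := by
        rw [sum_const, card_univ, Fintype.card_fin, nsmul_eq_mul]
        ring
end
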